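/- arXiv:2407.10112 — 3 statements merged into one kernel-verified Lean document; each statement's English description precedes it below -/
import Mathlib

section
/- Multilinear expansion of the customized message passing (Proposition 1, expanded form). Let R be a commutative ring and let the node embeddings evolve by the customized message passing rule h^{(0)}_m = e_m and h^{(l)}_m = h^{(l-1)}_m ⊙ (Σ_{n=1}^{N} A^{(l-1)}_{mn} · (W^{(l-1)} e_n)). Then for every layer index l and every node m, h^{(l)}_m = Σ_{n : Fin l → Fin N} ( ∏_{k=0}^{l-1} A^{(k)}_{m, n(k)} ) · ( e_m ⊙ (W^{(0)} e_{n(0)}) ⊙ ⋯ ⊙ (W^{(l-1)} e_{n(l-1)}) ), where the sum ranges over all functions n from {0,…,l-1} to {1,…,N}; in particular every summand is an elementwise product of exactly l+1 vectors each linearly derived from a single initial feature embedding, i.e. an (l+1)-order feature interaction. -/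
/-- Multilinear expansion of the customized message passing (Proposition 1, expanded form).
The sum ranges over all functions `n : Fin l → Fin N`; each summand is a scalar
`∏ k, A k m (n k)` times the Hadamard product of `e m` with the `l` vectors
`(W k).mulVec (e (n k))`, i.e. an `(l+1)`-order feature interaction. -/
theorem customized_message_passing_multilinear_expansion
    {R : Type*} [CommRing R] (d N : ℕ)
    (e : Fin N → (Fin d → R))
    (W : ℕ → Matrix (Fin d) (Fin d) R)
    (A : ℕ → Matrix (Fin N) (Fin N) R)
    (h : ℕ → Fin N → (Fin d → R))
    (h0 : ∀ m, h 0 m = e m)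
    (hstep : ∀ l m, h (l + 1) m
      = h l m * (∑ n : Fin N, A l m n • (W l).mulVec (e n))) :
    ∀ (l : ℕ) (m : Fin N),
      h l m = ∑ n : Fin l → Fin N,
        (∏ k : Fin l, A (k : ℕ) m (n k)) •
          (e m * ∏ k : Fin l, (W (k : ℕ)).mulVec (e (n k))) := by
  -- Unrolling the recursion gives a product of sums, which distributes over choice functions.
  have key : ∀ (l : ℕ) (m : Fin N),
      h l m = e m * ∏ k : Fin l, ∑ n : Fin N, A (k : ℕ) m n • (W (k : ℕ)).mulVec (e n) := by
    intro l m
    induction l with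
    | zero => simp [h0]
    | succ l ih => rw [hstep, ih, Fin.prod_univ_castSucc, mul_assoc]; rfl
  intro l m
  rw [key, Finset.prod_univ_sum, Fintype.piFinset_univ, Finset.mul_sum]
  refine Finset.sum_congr rfl fun n _ => ?_
  rw [Finset.prod_smul, mul_smul_comm]
end

section
/- Exact orders captured across layers (corollary of Proposition 1). Suppose every coordinate of every initial feature embedding e_m is a homogeneous multivariate polynomial of degree 1 over ℝ, and let the node embeddings evolve by the customized message passing rule h^{(0)}_m = e_m and h^{(l)}_m = h^{(l-1)}_m ⊙ (Σ_{n=1}^{N} A^{(l-1)}_{mn} · (W^{(l-1)} e_n)) with real matrices A^{(k)}, W^{(k)}. Then for every k ≥ 0, every node m, and every coordinate index j, if the polynomial (h^{(k)}_m)_j is nonzero then its total degree equals exactly k+1. Consequently, in the stacked representation H_m = [h^{(0)}_m; h^{(1)}_m; …; h^{(L)}_m] used by EmerG, the orders of feature interactions appearing are exactly contained in {1, 2, …, L+1}, with layer k contributing only order k+1. -/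
/-- Exact orders captured across layers (corollary of Proposition 1).
If every coordinate of every initial embedding is homogeneous of degree 1, then for
every layer `k`, node `m` and coordinate `j`, whenever the polynomial `h k m j` is
nonzero its total degree is exactly `k + 1`: layer `k` contributes only order `k + 1`
feature interactions. -/
theorem customized_message_passing_exact_orders
    (σ : Type*) (d N : ℕ)
    (e : Fin N → (Fin d → MvPolynomial σ ℝ))
    (he : ∀ (m : Fin N) (j : Fin d), (e m j).IsHomogeneous 1)
    (W : ℕ → Matrix (Fin d) (Fin d) ℝ)
    (A : ℕ → Matrix (Fin N) (Fin N) ℝ)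
    (h : ℕ → Fin N → (Fin d → MvPolynomial σ ℝ))
    (h0 : ∀ m, h 0 m = e m)
    (hstep : ∀ l m, h (l + 1) m
      = h l m * (∑ n : Fin N, A l m n • fun j => ∑ i : Fin d, W l j i • e n i)) :
    ∀ (k : ℕ) (m : Fin N) (j : Fin d),
      h k m j ≠ 0 → (h k m j).totalDegree = k + 1 := by
  -- Homogeneity of degree `k + 1` is the inductive invariant: each layer multiplies
  -- coordinatewise by an `ℝ`-linear combination of degree-1 forms.
  have hom : ∀ (k : ℕ) (m : Fin N) (j : Fin d), (h k m j).IsHomogeneous (k + 1) := by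
    intro k
    induction k with
    | zero =>
      intro m j
      rw [h0]
      exact he m j
    | succ k ih =>
      intro m j
      rw [hstep, Pi.mul_apply, Finset.sum_apply]
      refine (ih m j).mul ?_
      rw [← MvPolynomial.mem_homogeneousSubmodule]
      refine Submodule.sum_mem _ fun n _ => Submodule.smul_mem _ _ ?_
      exact Submodule.sum_mem _ fun i _ => Submodule.smul_mem _ _ (he n i)
  intro k m j hne
  exact (hom k m j).totalDegree hne
end

section
/- Exponential order growth under residual message passing (Appendix A.2). Let node embeddings evolve by the residual message passing rule h^{(l)}_m = h^{(l-1)}_m + h^{(l-1)}_m ⊙ ( Σ_{n=1}^{N} A^{(l-1)}_{mn} · (W^{(l-1)} h^{(l-1)}_n) ) with real matrices A^{(k)} ∈ ℝ^{N×N} and W^{(k)} ∈ ℝ^{d×d}, and suppose every coordinate of every initial embedding h^{(0)}_m has total degree at most 1. Then for every l ≥ 0 and every node m, every coordinate of h^{(l)}_m has total degree at most 2^l; i.e., the maximum order of feature interaction after l residual layers is bounded by 2^l rather than l+1. -/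
/-- Exponential order growth under residual message passing (Appendix A.2).
Under the residual rule, where aggregation uses the previous-layer embeddings, if every
coordinate of every initial embedding has total degree at most 1 then after `l` layers
every coordinate has total degree at most `2 ^ l`. -/
theorem residual_message_passing_degree_bound
    (σ : Type*) (d N : ℕ)
    (W : ℕ → Matrix (Fin d) (Fin d) ℝ)
    (A : ℕ → Matrix (Fin N) (Fin N) ℝ)
    (h : ℕ → Fin N → (Fin d → MvPolynomial σ ℝ))
    (h0 : ∀ (m : Fin N) (j : Fin d), (h 0 m j).totalDegree ≤ 1)
    (hstep : ∀ l m, h (l + 1) m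
      = h l m + h l m *
          (∑ n : Fin N, A l m n • fun i => ∑ i' : Fin d, W l i i' • h l n i')) :
    ∀ (l : ℕ) (m : Fin N) (j : Fin d), (h l m j).totalDegree ≤ 2 ^ l := by
  intro l
  induction l with
  | zero => simpa using h0
  | succ l ih =>
    intro m j
    -- Real linear combinations do not raise the degree, so the aggregated message keeps the
    -- layer-`l` bound; the Hadamard product with `h l m` then at most doubles it.
    have hagg : (∑ n : Fin N, A l m n • ∑ i' : Fin d, W l j i' • h l n i').totalDegree
        ≤ 2 ^ l :=
      MvPolynomial.totalDegree_finsetSum_le fun n _ =>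
        (MvPolynomial.totalDegree_smul_le _ _).trans <|
          MvPolynomial.totalDegree_finsetSum_le fun i' _ =>
            (MvPolynomial.totalDegree_smul_le _ _).trans (ih n i')
    have hmj := ih m j
    rw [hstep]
    simp only [Pi.add_apply, Pi.mul_apply, Finset.sum_apply, Pi.smul_apply]
    refine (MvPolynomial.totalDegree_add _ _).trans (max_le ?_ ?_)
    · exact hmj.trans (Nat.pow_le_pow_right two_pos l.le_succ)
    · refine (MvPolynomial.totalDegree_mul _ _).trans ?_
      rw [pow_succ]
      omega
end
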